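/- If G is an (a,b)-biregular bipartite graph with a < b, then š(G) ≥ 1 + ⌈b/a⌉. -/

import Mathlib

open SimpleGraph Finset

/-- A proper edge coloring of `G` with colors in `ℕ`: distinct edges of `G`
sharing an endpoint receive distinct colors. -/
def IsProperEdgeColoring {V : Type*} (G : SimpleGraph V) (c : Sym2 V → ℕ) : Prop :=
  ∀ e₁ ∈ G.edgeSet, ∀ e₂ ∈ G.edgeSet, e₁ ≠ e₂ → (∃ v, v ∈ e₁ ∧ v ∈ e₂) → c e₁ ≠ c e₂

/-- The palette of a vertex `v`: the set of colors appearing on edges of `G` incident with `v`. -/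
def palette {V : Type*} (G : SimpleGraph V) (c : Sym2 V → ℕ) (v : V) : Set ℕ :=
  {n | ∃ e ∈ G.edgeSet, v ∈ e ∧ c e = n}

/-- The palette index of `G`: the minimum number of distinct palettes occurring in a
proper edge coloring of `G`. -/
noncomputable def paletteIndex {V : Type*} (G : SimpleGraph V) : ℕ :=
  sInf {k | ∃ c : Sym2 V → ℕ, IsProperEdgeColoring G c ∧ (Set.range (palette G c)).ncard = k}

/-- `G` is `(a,b)`-biregular: bipartite with nonempty parts `(X, Y)` such that every
vertex in `X` has degree `a` and every vertex in `Y` has degree `b`. -/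
def IsBiregular {V : Type*} [Fintype V] (G : SimpleGraph V) [DecidableRel G.Adj] (a b : ℕ) : Prop :=
  ∃ X Y : Finset V, X.Nonempty ∧ Y.Nonempty ∧ Disjoint X Y ∧ (∀ v : V, v ∈ X ∨ v ∈ Y) ∧
    (∀ v w, G.Adj v w → (v ∈ X ∧ w ∈ Y) ∨ (v ∈ Y ∧ w ∈ X)) ∧
    (∀ v ∈ X, G.degree v = a) ∧ (∀ v ∈ Y, G.degree v = b)

/-!
Fix a proper edge coloring and a vertex `v` all of whose neighbors have degree at most
`a < deg v`. The `deg v` colors at `v` are covered by the palettes of its neighbors, each of size at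
most `a`, so the neighbors have at least `⌈deg v / a⌉` distinct palettes. The palette of `v` is
larger than each of them, which gives one more. In a biregular graph any vertex of `Y` can be `v`.
-/

theorem ncard_sUnion_le_ncard_mul {α : Type*} {S : Set (Set α)} (hS : S.Finite) {n : ℕ}
    (hn : ∀ s ∈ S, s.ncard ≤ n) : (⋃₀ S).ncard ≤ S.ncard * n := by
  lift S to Finset (Set α) using hS
  rw [Set.sUnion_eq_biUnion, Set.ncard_coe_finset]
  calc (⋃ s ∈ S, s).ncard ≤ ∑ s ∈ S, s.ncard := S.set_ncard_biUnion_le _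
    _ ≤ S.card * n := by simpa only [smul_eq_mul] using S.sum_le_card_nsmul _ n hn

section Palette

variable {V : Type*} {G : SimpleGraph V} {c : Sym2 V → ℕ} {v : V}

theorem exists_isProperEdgeColoring [Countable V] (G : SimpleGraph V) :
    ∃ c : Sym2 V → ℕ, IsProperEdgeColoring G c := by
  obtain ⟨c, hc⟩ := exists_injective_nat (Sym2 V)
  exact ⟨c, fun _ _ _ _ hne _ => hc.ne hne⟩

theorem le_paletteIndex [Countable V] {k : ℕ}
    (hk : ∀ c, IsProperEdgeColoring G c → k ≤ (Set.range (palette G c)).ncard) :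
    k ≤ paletteIndex G := by
  obtain ⟨c₀, hc₀⟩ := exists_isProperEdgeColoring G
  refine le_csInf ⟨_, c₀, hc₀, rfl⟩ ?_
  rintro _ ⟨c, hc, rfl⟩
  exact hk c hc

theorem palette_eq_image_neighborSet (G : SimpleGraph V) (c : Sym2 V → ℕ) (v : V) :
    palette G c v = (fun w => c s(v, w)) '' G.neighborSet v := by
  ext n
  constructor
  · rintro ⟨e, he, hv, rfl⟩
    obtain ⟨w, rfl⟩ := Sym2.mem_iff_exists.mp hv
    exact ⟨w, he, rfl⟩
  · rintro ⟨w, hw, rfl⟩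
    exact ⟨s(v, w), hw, Sym2.mem_mk_left v w, rfl⟩

theorem palette_subset_sUnion_image_neighborSet (G : SimpleGraph V) (c : Sym2 V → ℕ) (v : V) :
    palette G c v ⊆ ⋃₀ (palette G c '' G.neighborSet v) := by
  rw [palette_eq_image_neighborSet]
  rintro _ ⟨w, hw, rfl⟩
  exact ⟨palette G c w, ⟨w, hw, rfl⟩, s(v, w), hw, Sym2.mem_mk_right v w, rfl⟩

theorem palette_finite [Finite (G.neighborSet v)] (c : Sym2 V → ℕ) : (palette G c v).Finite := by
  rw [palette_eq_image_neighborSet]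
  exact (G.neighborSet v).toFinite.image _

namespace IsProperEdgeColoring

theorem injOn_neighborSet (hc : IsProperEdgeColoring G c) (v : V) :
    Set.InjOn (fun w => c s(v, w)) (G.neighborSet v) := by
  intro w hw w' hw' hcolor
  by_contra hne
  exact hc s(v, w) hw s(v, w') hw' (hne ∘ Sym2.congr_right.mp)
    ⟨v, Sym2.mem_mk_left v w, Sym2.mem_mk_left v w'⟩ hcolor

theorem ncard_palette [Fintype (G.neighborSet v)] (hc : IsProperEdgeColoring G c) :
    (palette G c v).ncard = G.degree v := by
  rw [palette_eq_image_neighborSet, (hc.injOn_neighborSet v).ncard_image,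
    ← G.coe_neighborFinset, Set.ncard_coe_finset, G.card_neighborFinset_eq_degree]

variable [G.LocallyFinite] {a : ℕ}

theorem degree_le_ncard_palette_image_neighborSet_mul (hc : IsProperEdgeColoring G c)
    (hdeg : ∀ w, G.Adj v w → G.degree w ≤ a) :
    G.degree v ≤ (palette G c '' G.neighborSet v).ncard * a := by
  have hfinite : (palette G c '' G.neighborSet v).Finite := (G.neighborSet v).toFinite.image _
  have hunion : (⋃₀ (palette G c '' G.neighborSet v)).Finite :=
    hfinite.sUnion (Set.forall_mem_image.mpr fun _ _ => palette_finite c)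
  calc G.degree v = (palette G c v).ncard := hc.ncard_palette.symm
    _ ≤ (⋃₀ (palette G c '' G.neighborSet v)).ncard :=
      Set.ncard_le_ncard (palette_subset_sUnion_image_neighborSet G c v) hunion
    _ ≤ (palette G c '' G.neighborSet v).ncard * a :=
      ncard_sUnion_le_ncard_mul hfinite <|
        Set.forall_mem_image.mpr fun w hw => hc.ncard_palette.trans_le (hdeg w hw)

theorem palette_notMem_image_neighborSet (hc : IsProperEdgeColoring G c)
    (hdeg : ∀ w, G.Adj v w → G.degree w < G.degree v) :
    palette G c v ∉ palette G c '' G.neighborSet v := by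
  rintro ⟨w, hw, hpalette⟩
  have hdegree : G.degree w = G.degree v := by
    rw [← hc.ncard_palette, hpalette, hc.ncard_palette]
  exact (hdeg w hw).ne hdegree

theorem ncard_palette_image_neighborSet_lt [Finite V] (hc : IsProperEdgeColoring G c)
    (hdeg : ∀ w, G.Adj v w → G.degree w < G.degree v) :
    (palette G c '' G.neighborSet v).ncard < (Set.range (palette G c)).ncard :=
  Set.ncard_lt_ncard <| (Set.image_subset_range _ _).ssubset_of_mem_notMem
    (Set.mem_range_self v) (hc.palette_notMem_image_neighborSet hdeg)

end IsProperEdgeColoring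

theorem palette_index_biregular_lower_general [Finite V] [G.LocallyFinite] {a : ℕ}
    (hav : a < G.degree v) (hdeg : ∀ w, G.Adj v w → G.degree w ≤ a) :
    1 + G.degree v ⌈/⌉ a ≤ paletteIndex G := by
  have ha : 0 < a := by
    obtain ⟨w, hvw⟩ := (G.degree_pos_iff_exists_adj v).mp (Nat.zero_lt_of_lt hav)
    exact hvw.symm.degree_pos_left.trans_le (hdeg w hvw)
  refine le_paletteIndex fun c hc => ?_
  have hceil : G.degree v ⌈/⌉ a ≤ (palette G c '' G.neighborSet v).ncard := by
    rw [ceilDiv_le_iff_le_mul ha, mul_comm]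
    exact hc.degree_le_ncard_palette_image_neighborSet_mul hdeg
  have hlt := hc.ncard_palette_image_neighborSet_lt fun w hw => (hdeg w hw).trans_lt hav
  omega

end Palette

theorem IsBiregular.exists_degree_eq_forall_adj_degree_eq {V : Type*} [Fintype V]
    {G : SimpleGraph V} [DecidableRel G.Adj] {a b : ℕ} (hG : IsBiregular G a b) :
    ∃ v, G.degree v = b ∧ ∀ w, G.Adj v w → G.degree w = a := by
  obtain ⟨X, Y, -, ⟨y, hy⟩, hXY, -, hadj, hX, hY⟩ := hG
  refine ⟨y, hY y hy, fun w hyw => hX w ?_⟩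
  rcases hadj y w hyw with ⟨hyX, -⟩ | ⟨-, hwX⟩
  · exact absurd hy (Finset.disjoint_left.mp hXY hyX)
  · exact hwX

/-- If `G` is an `(a,b)`-biregular graph with `a < b`, then `š(G) ≥ 1 + ⌈b/a⌉`. -/
theorem palette_index_biregular_lower {V : Type*} [Fintype V]
    (G : SimpleGraph V) [DecidableRel G.Adj] {a b : ℕ}
    (hab : a < b) (hG : IsBiregular G a b) :
    1 + (b + a - 1) / a ≤ paletteIndex G := by
  obtain ⟨v, rfl, hdeg⟩ := hG.exists_degree_eq_forall_adj_degree_eq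
  exact palette_index_biregular_lower_general hab fun w hvw => (hdeg w hvw).le
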